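/- There exists a constant C such that for every digraph D on n vertices and every integer k ≥ (3/2)·(δ*_min(D) + 1), the diameter of the k-dicolouring graph D_k(D) is at most C·n²; in particular C does not depend on k or on D. -/

import Mathlib

/-- A relation (digraph) is acyclic if no vertex lies on a directed cycle. -/
def RelAcyclic {V : Type} (r : V → V → Prop) : Prop :=
  ∀ v, ¬ Relation.TransGen r v v

/-- `α` is a `k`-dicolouring of the digraph `D`: each colour class induces
an acyclic subdigraph. -/
def IsDicolouring {V : Type} (D : V → V → Prop) (k : ℕ) (α : V → Fin k) : Prop :=
  ∀ c : Fin k, RelAcyclic (fun u v => D u v ∧ α u = c ∧ α v = c)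

/-- Two colourings differ on exactly one vertex. -/
def RecolAdj {V : Type} {k : ℕ} (α β : V → Fin k) : Prop :=
  ∃ v, α v ≠ β v ∧ ∀ w, w ≠ v → α w = β w

/-- A single edge of the `k`-dicolouring graph `D_k(D)`. -/
def RecolStep {V : Type} (D : V → V → Prop) (k : ℕ) (α β : V → Fin k) : Prop :=
  IsDicolouring D k α ∧ IsDicolouring D k β ∧ RecolAdj α β

/-- The digraph `D` is `k`-mixing: the `k`-dicolouring graph is connected. -/
def Mixing {V : Type} (D : V → V → Prop) (k : ℕ) : Prop :=
  ∀ α β : V → Fin k, IsDicolouring D k α → IsDicolouring D k β →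
    Relation.ReflTransGen (RecolStep D k) α β

/-- Out-degree of `v` in the subdigraph of `D` induced by `S`. -/
noncomputable def outDegOn {V : Type} (D : V → V → Prop) (S : Set V) (v : V) : ℕ :=
  {w ∈ S | D v w}.ncard

/-- In-degree of `v` in the subdigraph of `D` induced by `S`. -/
noncomputable def inDegOn {V : Type} (D : V → V → Prop) (S : Set V) (v : V) : ℕ :=
  {w ∈ S | D w v}.ncard

/-- An oriented graph: a digraph with no digon (hence also no loop). -/
def Oriented {V : Type} (D : V → V → Prop) : Prop :=
  ∀ u v, D u v → ¬ D v u

/-- A walk of length `m` in the `k`-dicolouring graph (a redicolouring sequence):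
consecutive dicolourings differ on exactly one vertex. -/
def RecolWalk {V : Type} (D : V → V → Prop) (k m : ℕ) (γ : ℕ → V → Fin k) : Prop :=
  (∀ i ≤ m, IsDicolouring D k (γ i)) ∧ ∀ i < m, RecolAdj (γ i) (γ (i + 1))

/-- A frozen `k`-dicolouring: no single vertex can be recoloured so as to
yield another `k`-dicolouring. -/
def FrozenDicolouring {V : Type} [DecidableEq V] (D : V → V → Prop) (k : ℕ)
    (α : V → Fin k) : Prop :=
  IsDicolouring D k α ∧
    ∀ (v : V) (c : Fin k), c ≠ α v → ¬ IsDicolouring D k (Function.update α v c)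

/-- The arc set of a digraph, as a set of ordered pairs. -/
def arcSet {V : Type} (D : V → V → Prop) : Set (V × V) := {p | D p.1 p.2}

/-- The arcs of `D` lying inside a set `S` of vertices. -/
def arcSetOn {V : Type} (D : V → V → Prop) (S : Set V) : Set (V × V) :=
  {p | p.1 ∈ S ∧ p.2 ∈ S ∧ D p.1 p.2}

/-!
If the min-degeneracy of `D` is at most `d`, the vertices can be ordered so that each `v` has a set
of at most `d` earlier vertices containing all its earlier out-neighbours or all its earlier
in-neighbours; a colouring in which every vertex avoids the colours of this set is a dicolouring.
We may assume `d < n`. Write `d + 1 = s + M` with `s = ⌊(d + 1) / 2⌋`, so that `s + 2M ≤ k`,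
`2s + M ≤ k` and `3s ≤ k`.

Let `B` be a set of `s` colours, and let `b` be a greedy colouring along the order that prefers the
colours of `B`. A vertex that does not receive a colour of `B` sees all of `B` on its earlier
neighbours, hence fewer than `M` of these are coloured outside `B`. Therefore a dicolouring that
avoids `B` can be turned into `b` in `O(Mn)` steps: first place the colours of `B`, then take the
remaining vertices into account one at a time, in increasing order. Since `k ≥ s + 2M`, a vertex
that is in conflict with the next move of an earlier neighbour can be given a colour that stays
safe for the next `M` such moves. As it has fewer than `M` relevant neighbours, `M + 1` moves per
vertex suffice by induction.

To reach a dicolouring that avoids some `s` colours, recolour greedily from the top of the order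
downwards, in blocks of `M` vertices. A block carries at most `M` colours and `2s + M ≤ k`, so `s`
colours that avoid both the block and the set `B` missing above it can be made the missing set of
the longer final segment. There are `O(n / M)` blocks, hence `O(n²)` steps. Finally, two
dicolourings missing sets `A` and `B` are both led to one greedy colouring that prefers a third set
disjoint from `A ∪ B`.
-/

section Acyclicity

variable {V C : Type} {k : ℕ} {D : V → V → Prop}

/-- Every out-neighbour of `v` satisfies `P`, or every in-neighbour of `v` does. Min-degeneracy
controls only one of the two neighbourhoods of a vertex, and one is enough to keep a vertex off all
directed cycles. -/
def ForallOutOrIn (D : V → V → Prop) (v : V) (P : V → Prop) : Prop :=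
  (∀ w, D v w → P w) ∨ ∀ w, D w v → P w

lemma ForallOutOrIn.imp {v : V} {P Q : V → Prop} (h : ForallOutOrIn D v P)
    (hPQ : ∀ w, w ≠ v → P w → Q w) (hv : ¬ D v v) : ForallOutOrIn D v Q :=
  Or.imp (fun h w hw => hPQ w (fun e => hv (e ▸ hw)) (h w hw))
    (fun h w hw => hPQ w (fun e => hv (e ▸ hw)) (h w hw)) h

/-- The subdigraph of `D` induced by `A` is acyclic. -/
def AcyclicOn (D : V → V → Prop) (A : Set V) : Prop :=
  RelAcyclic fun u v => D u v ∧ u ∈ A ∧ v ∈ A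

lemma RelAcyclic.mono {r s : V → V → Prop} (h : ∀ u v, r u v → s u v) (hs : RelAcyclic s) :
    RelAcyclic r :=
  fun v hv => hs v (Relation.TransGen.mono h _ _ hv)

lemma AcyclicOn.mono {A A' : Set V} (h : AcyclicOn D A') (hA : A ⊆ A') : AcyclicOn D A :=
  RelAcyclic.mono (fun _ _ huv => ⟨huv.1, hA huv.2.1, hA huv.2.2⟩) h

lemma AcyclicOn.swap {A : Set V} (h : AcyclicOn D A) : AcyclicOn (Function.swap D) A :=
  fun v hv => h v (Relation.transGen_swap.1
    (Relation.TransGen.mono (fun _ _ huv => ⟨huv.1, huv.2.2, huv.2.1⟩) _ _ hv))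

lemma AcyclicOn.insert_of_forall_out {A : Set V} {v : V} (hA : AcyclicOn D A)
    (hv : ∀ w, D v w → w ∉ insert v A) : AcyclicOn D (insert v A) := by
  intro x hx
  have mem_of_arc : ∀ {y z}, D y z ∧ y ∈ insert v A ∧ z ∈ insert v A → y ∈ A := fun {y z} h =>
    h.2.1.resolve_left fun hy => hv z (hy ▸ h.1) h.2.2
  have path_in_A : ∀ y, Relation.TransGen (fun y z => D y z ∧ y ∈ insert v A ∧ z ∈ insert v A) x y →
      y ∈ A → Relation.TransGen (fun y z => D y z ∧ y ∈ A ∧ z ∈ A) x y := by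
    intro y hy
    induction hy with
    | single h => exact fun hyA => .single ⟨h.1, mem_of_arc h, hyA⟩
    | tail _ h ih => exact fun hzA => (ih (mem_of_arc h)).tail ⟨h.1, mem_of_arc h, hzA⟩
  obtain ⟨_, hxy, _⟩ := Relation.TransGen.head'_iff.1 hx
  exact hA x (path_in_A x hx (mem_of_arc hxy))

lemma AcyclicOn.insert {A : Set V} {v : V} (hA : AcyclicOn D A) (hv : ¬ D v v)
    (h : ForallOutOrIn D v (· ∉ A)) : AcyclicOn D (insert v A) := by
  have avoids : ∀ w, w ≠ v → w ∉ A → w ∉ Insert.insert v A := fun w hwv hwA => by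
    simp [hwv, hwA]
  rcases h.imp avoids hv with hout | hin
  · exact hA.insert_of_forall_out hout
  · exact (hA.swap.insert_of_forall_out hin).swap

/-- `α` is a dicolouring of the subdigraph of `D` induced by `T`; its values outside `T` are
irrelevant. -/
def IsDicolouringOn (D : V → V → Prop) (T : Set V) (α : V → C) : Prop :=
  ∀ c, AcyclicOn D {v ∈ T | α v = c}

lemma isDicolouringOn_univ {α : V → Fin k} :
    IsDicolouringOn D Set.univ α ↔ IsDicolouring D k α := by
  simp [IsDicolouringOn, IsDicolouring, AcyclicOn]

lemma IsDicolouring.not_self {α : V → Fin k} (hα : IsDicolouring D k α) (v : V) : ¬ D v v :=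
  fun hv => hα (α v) v (.single ⟨hv, rfl, rfl⟩)

lemma IsDicolouring.of_classes {α β γ : V → Fin k} (hα : IsDicolouring D k α)
    (hβ : IsDicolouring D k β)
    (h : ∀ c, (∀ v, γ v = c → α v = c) ∨ ∀ v, γ v = c → β v = c) : IsDicolouring D k γ := by
  intro c
  rcases h c with hc | hc
  · exact RelAcyclic.mono (fun u v huv => ⟨huv.1, hc u huv.2.1, hc v huv.2.2⟩) (hα c)
  · exact RelAcyclic.mono (fun u v huv => ⟨huv.1, hc u huv.2.1, hc v huv.2.2⟩) (hβ c)

lemma IsDicolouringOn.mono {S T : Set V} {α : V → C} (hα : IsDicolouringOn D T α) (hST : S ⊆ T) :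
    IsDicolouringOn D S α :=
  fun c => (hα c).mono fun _ hv => ⟨hST hv.1, hv.2⟩

lemma IsDicolouringOn.congr {T : Set V} {α β : V → C} (hα : IsDicolouringOn D T α)
    (h : Set.EqOn α β T) : IsDicolouringOn D T β :=
  fun c => (hα c).mono fun _ hv => ⟨hv.1, (h hv.1).trans hv.2⟩

lemma IsDicolouringOn.insert {T : Set V} {α : V → C} {v : V} (hα : IsDicolouringOn D T α)
    (hv : ¬ D v v) (h : ForallOutOrIn D v fun w => w ∈ T → α w ≠ α v) :
    IsDicolouringOn D (insert v T) α := by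
  intro c
  by_cases hc : α v = c
  · refine ((hα c).insert hv (h.imp ?_ hv)).mono ?_
    · exact fun w _ hw hwc => hw hwc.1 (hwc.2.trans hc.symm)
    · exact fun w hw => hw.1.imp_right fun hwT => ⟨hwT, hw.2⟩
  · exact (hα c).mono fun w hw => ⟨hw.1.resolve_left fun e => hc (e ▸ hw.2), hw.2⟩

lemma IsDicolouringOn.of_forall_ne {S : Finset V} {r : V → ℕ} (hr : Function.Injective r)
    (hD : ∀ v, ¬ D v v) {α : V → C} (hα : IsDicolouringOn D (S : Set V)ᶜ α)
    (h : ∀ v ∈ S, ForallOutOrIn D v fun w => (w ∈ S → r w < r v) → α w ≠ α v) :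
    IsDicolouringOn D Set.univ α := by
  classical
  have extend : ∀ S' ⊆ S, IsDicolouringOn D ((S : Set V)ᶜ ∪ S') α := by
    intro S'
    induction S' using Finset.induction_on_max_value r with
    | empty => simpa using hα
    | insert v S' _ hmax ih =>
      intro hS
      obtain ⟨hvS, hS'⟩ := Finset.insert_subset_iff.1 hS
      rw [Finset.coe_insert, Set.union_insert]
      refine (ih hS').insert (hD v) ((h v hvS).imp (fun w hwv hw hwT => hw fun hwS => ?_) (hD v))
      have hwS' : w ∈ S' := hwT.resolve_left (not_not_intro hwS)
      exact (hmax w hwS').lt_of_ne (hr.ne hwv)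
  simpa using extend S subset_rfl

end Acyclicity

section DicolouringGraph

variable {V : Type} {k : ℕ} {D : V → V → Prop}

/-- The `k`-dicolouring graph `D_k(D)`. Its vertex type consists of all maps `V → Fin k`; the maps
that are not dicolourings are isolated vertices, at infinite distance from everything else. -/
def dicolouringGraph (D : V → V → Prop) (k : ℕ) : SimpleGraph (V → Fin k) where
  Adj := RecolStep D k
  symm := ⟨fun _ _ ⟨hα, hβ, v, hv, h⟩ => ⟨hβ, hα, v, hv.symm, fun w hw => (h w hw).symm⟩⟩
  loopless := ⟨fun _ ⟨_, _, _, hv, _⟩ => hv rfl⟩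

lemma exists_recolWalk_of_edist_le {α β : V → Fin k} {m : ℕ} (hα : IsDicolouring D k α)
    (h : (dicolouringGraph D k).edist α β ≤ m) :
    ∃ (l : ℕ) (γ : ℕ → V → Fin k), γ 0 = α ∧ γ l = β ∧ RecolWalk D k l γ ∧ l ≤ m := by
  obtain ⟨p, hp⟩ := SimpleGraph.exists_walk_of_edist_ne_top (ne_top_of_le_ne_top (by simp) h)
  refine ⟨p.length, p.getVert, p.getVert_zero, p.getVert_length, ⟨?_, ?_⟩, by
    rw [← hp] at h; exact_mod_cast h⟩
  · rintro (_ | i) hi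
    · simpa using hα
    · exact (p.adj_getVert_succ hi).2.1
  · exact fun i hi => (p.adj_getVert_succ hi).2.2

lemma edist_le_add {α β γ : V → Fin k} {m n : ℕ} (h : (dicolouringGraph D k).edist α β ≤ m)
    (h' : (dicolouringGraph D k).edist β γ ≤ n) :
    (dicolouringGraph D k).edist α γ ≤ (m + n : ℕ) := by
  push_cast
  exact SimpleGraph.edist_triangle.trans (add_le_add h h')

lemma edist_update_le_one [DecidableEq V] {α : V → Fin k} {v : V} {c : Fin k}
    (hα : IsDicolouring D k α) (h : IsDicolouring D k (Function.update α v c)) :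
    (dicolouringGraph D k).edist α (Function.update α v c) ≤ (1 : ℕ) := by
  rw [Nat.cast_one, SimpleGraph.edist_le_one_iff_adj_or_eq]
  by_cases hc : α v = c
  · exact Or.inr (by simp [← hc])
  · exact Or.inl ⟨hα, h, v, by simpa using hc, fun w hw => by simp [hw]⟩

lemma edist_piecewise_le_card [DecidableEq V] {α β : V → Fin k} (X : Finset V)
    (h : ∀ Y ⊆ X, IsDicolouring D k (Y.piecewise β α)) :
    (dicolouringGraph D k).edist α (X.piecewise β α) ≤ X.card := by
  induction X using Finset.induction_on with
  | empty => simp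
  | insert v X hv ih =>
    have hX : IsDicolouring D k (X.piecewise β α) := h X (Finset.subset_insert v X)
    have hvX : IsDicolouring D k ((insert v X).piecewise β α) := h _ subset_rfl
    rw [Finset.piecewise_insert] at hvX ⊢
    rw [Finset.card_insert_of_notMem hv]
    exact edist_le_add (ih fun Y hY => h Y (hY.trans (Finset.subset_insert v X)))
      (edist_update_le_one hX hvX)

end DicolouringGraph

section Moves

variable {V C : Type*}

lemma exists_notMem_forall_ne [Fintype C] {F : Finset C} {N : Finset V}
    (h : F.card + N.card < Fintype.card C) (g : V → C) : ∃ c ∉ F, ∀ w ∈ N, g w ≠ c := by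
  classical
  have hcard : (F ∪ N.image g).card < (Finset.univ : Finset C).card :=
    calc _ ≤ F.card + (N.image g).card := Finset.card_union_le _ _
      _ ≤ F.card + N.card := by grw [Finset.card_image_le]
      _ < _ := h
  obtain ⟨c, -, hc⟩ := Finset.exists_mem_notMem_of_card_lt_card hcard
  simp only [Finset.mem_union, Finset.mem_image, not_or, not_exists, not_and] at hc
  exact ⟨c, hc⟩

lemma exists_notMem_take_forall_ne [Fintype C] {B : Finset C} {N : Finset V} {M : ℕ}
    (hC : B.card + 2 * M ≤ Fintype.card C) (hN : N.card < M) (g : V → C) (L : List C) :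
    ∃ c ∉ B, c ∉ L.take M ∧ ∀ w ∈ N, g w ≠ c := by
  classical
  have hcard : (B ∪ (L.take M).toFinset).card ≤ B.card + M :=
    (Finset.card_union_le _ _).trans (by grw [List.toFinset_card_le, List.length_take_le])
  obtain ⟨c, hcB, hcN⟩ := exists_notMem_forall_ne
    (F := B ∪ (L.take M).toFinset) (N := N) (by omega) g
  simp only [Finset.mem_union, List.mem_toFinset, not_or] at hcB
  exact ⟨c, hcB.1, hcB.2, hcN⟩

variable [DecidableEq V]

/-- A move `(v, c)` gives the vertex `v` the colour `c`. Recolouring sequences are encoded as lists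
`l` of moves; `l.scanl recolour g` lists the colourings visited when `l` is run from `g`. -/
def recolour (g : V → C) (p : V × C) : V → C :=
  Function.update g p.1 p.2

lemma update_foldl_recolour (l : List (V × C)) (g : V → C) (v : V) (c : C) :
    Function.update (l.foldl recolour g) v c =
      (l.filter (·.1 ≠ v)).foldl recolour (Function.update g v c) := by
  induction l generalizing g with
  | nil => rfl
  | cons p l ih =>
    rw [List.foldl_cons, ih]
    by_cases hp : p.1 = v
    · simp [recolour, hp]
    · simp [recolour, hp, Function.update_comm (Ne.symm hp)]

lemma countP_fst_mem_le {N : Finset V} {m : ℕ} {l : List (V × C)}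
    (h : ∀ u ∈ N, l.countP (·.1 = u) ≤ m) : l.countP (·.1 ∈ N) ≤ N.card * m := by
  have count_eq_sum : l.countP (·.1 ∈ N) = ∑ u ∈ N, l.countP (·.1 = u) := by
    clear h
    induction l with
    | nil => simp
    | cons p l ih => simp [List.countP_cons, ih, Finset.sum_add_distrib]
  rw [count_eq_sum]
  exact Finset.sum_le_card_nsmul N _ m h

lemma length_le_card_mul [Fintype V] {m : ℕ} {l : List (V × C)}
    (h : ∀ u, l.countP (·.1 = u) ≤ m) : l.length ≤ Fintype.card V * m := by
  simpa using countP_fst_mem_le (N := Finset.univ) fun u _ => h u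

/-- The recolouring sequence `l'` arises from `l` by inserting at most `t` moves of the vertex `v`,
and every colouring visited when `l'` is run from `h` satisfies `Q`. -/
structure IsExtension (Q : (V → C) → Prop) (v : V) (t : ℕ) (h : V → C) (l l' : List (V × C)) :
    Prop where
  filter_ne : l'.filter (·.1 ≠ v) = l
  count_le : l'.countP (·.1 = v) ≤ t
  visited : ∀ h' ∈ l'.scanl recolour h, Q h'

namespace IsExtension

variable {Q : (V → C) → Prop} {v : V} {t : ℕ} {h : V → C} {l l' : List (V × C)}

lemma nil (hQ : Q h) : IsExtension Q v t h [] [] where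
  filter_ne := rfl
  count_le := Nat.zero_le t
  visited := by simpa using hQ

lemma cons {p : V × C} (hp : p.1 ≠ v) (hQ : Q h) (H : IsExtension Q v t (recolour h p) l l') :
    IsExtension Q v t h (p :: l) (p :: l') where
  filter_ne := by simpa [hp] using H.filter_ne
  count_le := by simpa [hp] using H.count_le
  visited := by simpa [List.scanl_cons, hQ] using H.visited

lemma insert {c : C} (hQ : Q h) (H : IsExtension Q v t (Function.update h v c) l l') :
    IsExtension Q v (t + 1) h l ((v, c) :: l') where
  filter_ne := by simpa using H.filter_ne
  count_le := by simpa using H.count_le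
  visited := by simpa [List.scanl_cons, recolour, hQ] using H.visited

lemma countP_eq_of_ne {u : V} (H : IsExtension Q v t h l l') (hu : u ≠ v) :
    l'.countP (·.1 = u) = l.countP (·.1 = u) := by
  rw [← H.filter_ne, List.countP_filter]
  refine List.countP_congr fun p _ => ?_
  simp only [decide_eq_true_eq, Bool.and_eq_true]
  exact ⟨fun hp => ⟨hp, hp ▸ hu⟩, And.left⟩

lemma update_foldl (H : IsExtension Q v t h l l') (c : C) :
    Function.update (l'.foldl recolour h) v c = Function.update (l.foldl recolour h) v c := by
  rw [update_foldl_recolour, update_foldl_recolour, ← H.filter_ne, List.filter_filter]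
  simp only [Bool.and_self]

lemma concat {c : C} (H : IsExtension Q v t h l l')
    (hQ : Q (Function.update (l.foldl recolour h) v c)) :
    IsExtension Q v (t + 1) h l (l' ++ [(v, c)]) where
  filter_ne := by simpa using H.filter_ne
  count_le := by simpa using H.count_le
  visited := by
    rw [← H.update_foldl] at hQ
    simpa [List.scanl_append, or_imp, forall_and, recolour, hQ] using H.visited

end IsExtension

variable [Fintype C] {Q Q' : (V → C) → Prop} {v : V} {N : Finset V} {B : Finset C}
  {M : ℕ}

-- `v` sits at the colour `x`, which avoids `B` and the current colours of `N`, and none of the next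
-- `a` moves in `N` uses `x`. When these are used up, `v` moves to a colour that stays safe for the
-- next `M` moves in `N`; `B`, `N` and these moves forbid fewer than `|B| + 2M` colours.
lemma exists_isExtension_of_window
    (hQ : ∀ g x, Q g → x ∉ B → (∀ w ∈ N, g w ≠ x) → Q' (Function.update g v x))
    (hN : N.card < M) (hC : B.card + 2 * M ≤ Fintype.card C) {l : List (V × C)} {g : V → C} {x : C}
    {a t : ℕ} (hl : ∀ p ∈ l, p.1 ≠ v) (hg : ∀ h ∈ l.scanl recolour g, Q h) (hxB : x ∉ B)
    (hxN : ∀ w ∈ N, g w ≠ x) (hxa : x ∉ ((l.filter (·.1 ∈ N)).map Prod.snd).take a)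
    (hcount : l.countP (·.1 ∈ N) ≤ a + M * t) :
    ∃ l', IsExtension Q' v t (Function.update g v x) l l' := by
  induction l generalizing g x a t with
  | nil => exact ⟨[], .nil (hQ g x (hg g (by simp)) hxB hxN)⟩
  | cons p l ih =>
    obtain ⟨hpv, hl⟩ := List.forall_mem_cons.1 hl
    rw [List.scanl_cons, List.forall_mem_cons] at hg
    obtain ⟨hQg, hg⟩ := hg
    have keep_move : ∀ {y a t}, y ∉ B → (∀ w ∈ N, g w ≠ y) → (p.1 ∈ N → p.2 ≠ y) →
        y ∉ ((l.filter (·.1 ∈ N)).map Prod.snd).take a → l.countP (·.1 ∈ N) ≤ a + M * t →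
        ∃ l', IsExtension Q' v t (Function.update g v y) (p :: l) l' := by
      intro y a t hyB hyN hpy hya hyc
      have hyN' : ∀ w ∈ N, recolour g p w ≠ y := fun w hw => by
        rcases eq_or_ne w p.1 with rfl | hwp
        · simpa [recolour] using hpy hw
        · simpa [recolour, hwp] using hyN w hw
      obtain ⟨l', hl'⟩ := ih hl hg hyB hyN' hya hyc
      rw [recolour, Function.update_comm hpv] at hl'
      exact ⟨p :: l', hl'.cons hpv (hQ g y hQg hyB hyN)⟩
    by_cases hpN : p.1 ∈ N
    · simp only [List.filter_cons, List.countP_cons, hpN, decide_true, if_true, List.map_cons]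
        at hxa hcount
      rcases a with _ | a
      · obtain ⟨y, hyB, hy, hyN⟩ := exists_notMem_take_forall_ne hC hN g
          (((p :: l).filter (·.1 ∈ N)).map Prod.snd)
        obtain ⟨m, rfl⟩ : ∃ m, M = m + 1 := ⟨M - 1, by omega⟩
        obtain ⟨t, rfl⟩ : ∃ s, t = s + 1 := ⟨t - 1, by rcases t with _ | t <;> omega⟩
        simp only [List.filter_cons, hpN, decide_true, if_true, List.map_cons, List.take_succ_cons,
          List.mem_cons, not_or] at hy
        obtain ⟨l', hl'⟩ := keep_move (t := t) hyB hyN (fun _ => Ne.symm hy.1) hy.2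
          (by rw [Nat.mul_succ] at hcount; omega)
        refine ⟨(v, y) :: l', .insert (hQ g x hQg hxB hxN) ?_⟩
        rwa [Function.update_idem]
      · rw [List.take_succ_cons, List.mem_cons, not_or] at hxa
        exact keep_move hxB hxN (fun _ => Ne.symm hxa.1) hxa.2 (by omega)
    · exact keep_move hxB hxN (fun h => absurd h hpN) (by simpa [hpN] using hxa)
        (by simpa [hpN] using hcount)

lemma exists_isExtension
    (hQ : ∀ g x, Q g → x ∉ B → (∀ w ∈ N, g w ≠ x) → Q' (Function.update g v x))
    (hN : N.card < M) (hC : B.card + 2 * M ≤ Fintype.card C) {l : List (V × C)} {g : V → C} {y : C}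
    (hl : ∀ p ∈ l, p.1 ≠ v) (hg : ∀ h ∈ l.scanl recolour g, Q h)
    (hcount : ∀ u ∈ N, l.countP (·.1 = u) ≤ M + 1) (hQ'g : Q' g)
    (hQ'y : Q' (Function.update (l.foldl recolour g) v y)) :
    ∃ l', IsExtension Q' v (M + 1) g l (l' ++ [(v, y)]) := by
  obtain ⟨x, hxB, hx, hxN⟩ := exists_notMem_take_forall_ne hC hN g
    ((l.filter (·.1 ∈ N)).map Prod.snd)
  obtain ⟨m, rfl⟩ : ∃ m, M = m + 1 := ⟨M - 1, by omega⟩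
  have hcount' : l.countP (·.1 ∈ N) ≤ m + 1 + (m + 1) * m := by
    have := Nat.mul_le_mul_right (m + 2) (Nat.lt_succ_iff.1 hN)
    linarith [countP_fst_mem_le hcount]
  obtain ⟨l', hl'⟩ := exists_isExtension_of_window hQ hN hC hl hg hxB hxN hx hcount'
  exact ⟨(v, x) :: l', (hl'.insert hQ'g).concat hQ'y⟩

end Moves

section ListRecolouring

variable {V : Type} {D : V → V → Prop} {k : ℕ}

lemma edist_foldl_recolour_le [DecidableEq V] {l : List (V × Fin k)} {g : V → Fin k}
    (h : ∀ γ ∈ l.scanl recolour g, IsDicolouring D k γ) :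
    (dicolouringGraph D k).edist g (l.foldl recolour g) ≤ l.length := by
  induction l generalizing g with
  | nil => simp
  | cons p l ih =>
    rw [List.scanl_cons, List.forall_mem_cons] at h
    have hp : IsDicolouring D k (recolour g p) := h.2 _ (by cases l <;> simp [List.scanl_cons])
    rw [List.length_cons, add_comm]
    exact edist_le_add (edist_update_le_one h.1 hp) (ih h.2)

/-- `g` is a stage of the recolouring of `S` starting from `a` at which only the vertices of `S'`
have been taken into account: it agrees with `a` off `S'`, and it is only required to be a
dicolouring of the subdigraph induced by the complement of `S \ S'`. -/
structure IsPartialStage (D : V → V → Prop) (S : Finset V) (a : V → Fin k) (S' : Finset V)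
    (g : V → Fin k) : Prop where
  isDicolouringOn : IsDicolouringOn D ((S : Set V)ᶜ ∪ S') g
  eq_of_notMem : ∀ w ∉ S', g w = a w

variable {S : Finset V} {r : V → ℕ} {N : V → Finset V} {B : Finset (Fin k)} {M : ℕ}
  {a b : V → Fin k}

lemma IsPartialStage.update [DecidableEq V] {S' N : Finset V} {v : V} {g : V → Fin k} {x : Fin k}
    (hg : IsPartialStage D S a S' g) (hv : ¬ D v v) (hmax : ∀ w ∈ S', r w ≤ r v)
    (hr : Function.Injective r)
    (hcov : ForallOutOrIn D v fun w => (w ∈ S → r w < r v) → w ∈ N ∨ w ∉ S ∧ a w ∈ B)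
    (hvS : v ∈ S) (hvS' : v ∉ S') (hS' : S' ⊆ S) (hxB : x ∉ B) (hxN : ∀ w ∈ N, g w ≠ x) :
    IsPartialStage D S a (insert v S') (Function.update g v x) where
  eq_of_notMem w hw := by
    rw [Finset.mem_insert, not_or] at hw
    rw [Function.update_of_ne hw.1, hg.eq_of_notMem w hw.2]
  isDicolouringOn := by
    have hvT : v ∉ (S : Set V)ᶜ ∪ S' := by simp [hvS, hvS']
    rw [Finset.coe_insert, Set.union_insert]
    refine (hg.isDicolouringOn.congr fun w hw => ?_).insert hv
      (hcov.imp (fun w hwv hw hwT => ?_) hv)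
    · rw [Function.update_of_ne (ne_of_mem_of_not_mem hw hvT)]
    rw [Function.update_of_ne hwv, Function.update_self]
    have hw_earlier : w ∈ S → r w < r v := fun hwS =>
      (hmax w (hwT.resolve_left (not_not_intro hwS))).lt_of_ne (hr.ne hwv)
    rcases hw hw_earlier with hwN | ⟨hwS, hwB⟩
    · exact hxN w hwN
    · rw [hg.eq_of_notMem w fun hwS' => hwS (hS' hwS')]
      exact ne_of_mem_of_not_mem hwB hxB

lemma exists_moves_of_subset [DecidableEq V] (hr : Function.Injective r) (hD : ∀ v, ¬ D v v)
    (hcov : ∀ v ∈ S, ForallOutOrIn D v fun w =>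
      (w ∈ S → r w < r v) → w ∈ N v ∨ w ∉ S ∧ a w ∈ B)
    (hN : ∀ v ∈ S, (N v).card < M) (hk : B.card + 2 * M ≤ k) (ha : IsDicolouring D k a)
    (hb : IsDicolouring D k b) (hab : ∀ v ∉ S, a v = b v)
    {S' : Finset V} (hS' : S' ⊆ S) :
    ∃ l : List (V × Fin k), (∀ p ∈ l, p.1 ∈ S') ∧ (∀ u, l.countP (·.1 = u) ≤ M + 1) ∧
      (∀ v ∈ S', l.foldl recolour a v = b v) ∧
      ∀ g ∈ l.scanl recolour a, IsPartialStage D S a S' g := by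
  have stage_start : ∀ S', IsPartialStage D S a S' a := fun S' =>
    ⟨(isDicolouringOn_univ.2 ha).mono (Set.subset_univ _), fun _ _ => rfl⟩
  induction S' using Finset.induction_on_max_value r with
  | empty => exact ⟨[], by simp, by simp, by simp, by simpa using stage_start ∅⟩
  | insert v S' hv hmax ih =>
    obtain ⟨hvS, hS'⟩ := Finset.insert_subset_iff.1 hS'
    obtain ⟨l, hl, hcount, hfinal, hvisited⟩ := ih hS'
    have hlv : ∀ p ∈ l, p.1 ≠ v := fun p hp e => hv (e ▸ hl p hp)
    have hend := hvisited _ (List.mem_of_getLast? List.getLast?_scanl)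
    have end_eq : ∀ w, w ∉ S ∨ w ∈ insert v S' →
        Function.update (l.foldl recolour a) v (b v) w = b w := by
      intro w hw
      rcases eq_or_ne w v with rfl | hwv
      · exact Function.update_self ..
      rw [Function.update_of_ne hwv]
      rcases hw with hwS | hwS'
      · rw [hend.eq_of_notMem w fun h => hwS (hS' h), hab w hwS]
      · exact hfinal w (Finset.mem_of_mem_insert_of_ne hwS' hwv)
    have stage_end : IsPartialStage D S a (insert v S')
        (Function.update (l.foldl recolour a) v (b v)) := by
      refine ⟨((isDicolouringOn_univ.2 hb).mono (Set.subset_univ _)).congr fun w hw =>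
        (end_eq w hw).symm, fun w hw => ?_⟩
      rw [Finset.mem_insert, not_or] at hw
      rw [Function.update_of_ne hw.1, hend.eq_of_notMem w hw.2]
    obtain ⟨l', hl'⟩ := exists_isExtension
      (fun g x hg => hg.update (hD v) hmax hr (hcov v hvS) hvS hv hS')
      (hN v hvS) (by simpa using hk) hlv hvisited (fun u _ => hcount u) (stage_start _) stage_end
    refine ⟨l' ++ [(v, b v)], fun p hp => ?_, fun u => ?_, fun w hw => ?_, hl'.visited⟩
    · rw [Finset.mem_insert, or_iff_not_imp_left]
      exact fun hpv => hl p (hl'.filter_ne ▸ List.mem_filter.2 ⟨hp, by simpa using hpv⟩)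
    · rcases eq_or_ne u v with rfl | huv
      · exact hl'.count_le
      · exact (hl'.countP_eq_of_ne huv).trans_le (hcount u)
    · rw [← end_eq w (Or.inr hw), ← hl'.update_foldl]
      simp [recolour]

lemma edist_le_of_forallOutOrIn [Fintype V] (hr : Function.Injective r) (hD : ∀ v, ¬ D v v)
    (hcov : ∀ v ∈ S, ForallOutOrIn D v fun w =>
      (w ∈ S → r w < r v) → w ∈ N v ∨ w ∉ S ∧ a w ∈ B)
    (hN : ∀ v ∈ S, (N v).card < M) (hk : B.card + 2 * M ≤ k) (ha : IsDicolouring D k a)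
    (hb : IsDicolouring D k b) (hab : ∀ v ∉ S, a v = b v) :
    (dicolouringGraph D k).edist a b ≤ (Fintype.card V * (M + 1) : ℕ) := by
  classical
  obtain ⟨l, -, hcount, hfinal, hvisited⟩ :=
    exists_moves_of_subset hr hD hcov hN hk ha hb hab subset_rfl
  have hend : l.foldl recolour a = b := by
    ext1 v
    by_cases hv : v ∈ S
    · exact hfinal v hv
    · rw [← hab v hv]
      exact (hvisited _ (List.mem_of_getLast? List.getLast?_scanl)).eq_of_notMem v hv
  rw [← hend]
  refine (edist_foldl_recolour_le fun g hg => ?_).trans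
    (by exact_mod_cast length_le_card_mul hcount)
  simpa [isDicolouringOn_univ] using (hvisited g hg).isDicolouringOn

end ListRecolouring

section MinDegenerateOrder

variable {V : Type} {D : V → V → Prop} {d : ℕ}

lemma min_degOn_mono {S T : Set V} (hST : S ⊆ T) (hT : T.Finite) (v : V) :
    min (outDegOn D S v) (inDegOn D S v) ≤ min (outDegOn D T v) (inDegOn D T v) :=
  min_le_min
    (Set.ncard_le_ncard (fun _ hw => ⟨hST hw.1, hw.2⟩) (hT.subset (Set.sep_subset _ _)))
    (Set.ncard_le_ncard (fun _ hw => ⟨hST hw.1, hw.2⟩) (hT.subset (Set.sep_subset _ _)))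

lemma exists_rank_min_degOn_le
    (hdeg : ∀ S : Set V, S.Nonempty → ∃ v ∈ S, min (outDegOn D S v) (inDegOn D S v) ≤ d)
    (S : Finset V) : ∃ r : V → ℕ, Set.InjOn r S ∧ (∀ v ∈ S, r v < S.card) ∧
      ∀ v ∈ S, min (outDegOn D {w ∈ S | r w < r v} v) (inDegOn D {w ∈ S | r w < r v} v) ≤ d := by
  classical
  induction S using Finset.strongInduction with | H S ih
  rcases S.eq_empty_or_nonempty with rfl | hS
  · exact ⟨0, by simp⟩
  obtain ⟨v, hvS, hv⟩ := hdeg S hS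
  obtain ⟨T, hvT, rfl⟩ : ∃ T, v ∉ T ∧ insert v T = S :=
    ⟨S.erase v, Finset.notMem_erase v S, Finset.insert_erase hvS⟩
  obtain ⟨r, hinj, hlt, hr⟩ := ih T (Finset.ssubset_insert hvT)
  obtain ⟨r', hr'v, hr'⟩ : ∃ r' : V → ℕ, r' v = T.card ∧ ∀ u ∈ T, r' u = r u :=
    ⟨Function.update r v T.card, Function.update_self .., fun u hu =>
      Function.update_of_ne (ne_of_mem_of_not_mem hu hvT) ..⟩
  rw [Finset.card_insert_of_notMem hvT, Finset.coe_insert]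
  refine ⟨r', (Set.injOn_insert (by simpa using hvT)).2
    ⟨hinj.congr fun u hu => (hr' u hu).symm, ?_⟩, ?_, ?_⟩
  · rintro ⟨u, hu, hur⟩
    exact (hlt u hu).ne (by rw [← hr' u hu, hur, hr'v])
  · rw [Finset.forall_mem_insert]
    exact ⟨by omega, fun u hu => hr' u hu ▸ (hlt u hu).trans (by omega)⟩
  rw [Finset.forall_mem_insert]
  refine ⟨(min_degOn_mono (fun w hw => hw.1) (Finset.finite_toSet _) v).trans hv, fun u hu => ?_⟩
  refine (min_degOn_mono ?_ (T.finite_toSet.subset (Set.sep_subset _ _)) u).trans (hr u hu)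
  rintro w ⟨hw, hwu⟩
  rw [hr' u hu] at hwu
  rcases Finset.mem_insert.1 hw with rfl | hwT
  · exact absurd (hlt u hu) (by omega)
  · exact ⟨hwT, hr' w hwT ▸ hwu⟩

variable [Fintype V]

/-- A linear order of the vertices, given by `rank`, witnessing min-degeneracy at most `d`: for each
vertex `v`, `nbrs v` is a set of at most `d` earlier vertices that contains all earlier
out-neighbours of `v` or all earlier in-neighbours of `v`. -/
structure MinDegenerateOrder (D : V → V → Prop) (d : ℕ) where
  rank : V → ℕ
  rank_injective : Function.Injective rank
  rank_lt_card : ∀ v, rank v < Fintype.card V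
  nbrs : V → Finset V
  rank_lt_of_mem_nbrs : ∀ {v w}, w ∈ nbrs v → rank w < rank v
  card_nbrs_le : ∀ v, (nbrs v).card ≤ d
  covers : ∀ v, ForallOutOrIn D v fun w => rank w < rank v → w ∈ nbrs v

lemma exists_nbrs_of_outDegOn_le {r : V → ℕ} {v : V} (h : outDegOn D {w | r w < r v} v ≤ d) :
    ∃ N : Finset V, (∀ w ∈ N, r w < r v) ∧ N.card ≤ min d (Fintype.card V - 1) ∧
      ∀ w, D v w → r w < r v → w ∈ N := by
  classical
  refine ⟨({w | r w < r v ∧ D v w} : Finset V), by simp +contextual, le_min ?_ ?_,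
    by simp +contextual⟩
  · rw [← Set.ncard_coe_finset]
    simpa [outDegOn] using h
  · rw [← Finset.card_univ, ← Finset.card_erase_of_mem (Finset.mem_univ v)]
    refine Finset.card_le_card fun w hw => ?_
    have hwv : w ≠ v := by rintro rfl; simp at hw
    simpa using hwv

lemma nonempty_minDegenerateOrder
    (hdeg : ∀ S : Set V, S.Nonempty → ∃ v ∈ S, min (outDegOn D S v) (inDegOn D S v) ≤ d) :
    Nonempty (MinDegenerateOrder D (min d (Fintype.card V - 1))) := by
  obtain ⟨r, hinj, hlt, hr⟩ := exists_rank_min_degOn_le hdeg Finset.univ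
  simp only [Finset.mem_univ, true_and, forall_const] at hlt hr
  have exists_nbrs : ∀ v, ∃ N : Finset V, (∀ w ∈ N, r w < r v) ∧
      N.card ≤ min d (Fintype.card V - 1) ∧ ForallOutOrIn D v fun w => r w < r v → w ∈ N := by
    intro v
    rcases min_le_iff.1 (hr v) with hout | hin
    · exact (exists_nbrs_of_outDegOn_le hout).imp fun N hN => ⟨hN.1, hN.2.1, Or.inl hN.2.2⟩
    · exact (exists_nbrs_of_outDegOn_le (D := Function.swap D) hin).imp fun N hN =>
        ⟨hN.1, hN.2.1, Or.inr hN.2.2⟩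
  choose N hN_lt hN_card hN using exists_nbrs
  exact ⟨{ rank := r
           rank_injective := by simpa using hinj
           rank_lt_card := hlt
           nbrs := N
           rank_lt_of_mem_nbrs := fun hw => hN_lt _ _ hw
           card_nbrs_le := hN_card
           covers := hN }⟩

end MinDegenerateOrder

section Greedy

lemma exists_fun_forall_of_rank {V C : Type*} [Nonempty C] (r : V → ℕ) {P : V → (V → C) → C → Prop}
    (hcongr : ∀ v g g' c, (∀ w, r w < r v → g w = g' w) → P v g c → P v g' c)
    (hex : ∀ v g, ∃ c, P v g c) : ∃ b : V → C, ∀ v, P v b (b v) := by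
  classical
  obtain ⟨c₀⟩ := ‹Nonempty C›
  choose F hF using hex
  let b : V → C := (measure r).wf.fix fun v rec =>
    F v fun w => if h : r w < r v then rec w h else c₀
  have b_eq : ∀ v, b v = F v fun w => if r w < r v then b w else c₀ := fun v =>
    (measure r).wf.fix_eq _ v
  refine ⟨b, fun v => hcongr v (fun w => if r w < r v then b w else c₀) b (b v)
    (fun w hw => if_pos hw) ?_⟩
  rw [b_eq v]
  exact hF v _

/-- The colour `c` does not occur on `N`, and lies in the set `B` of preferred colours unless every
colour of `B` occurs on `N`. -/
def IsGreedyChoice {V C : Type*} (N : Finset V) (B : Finset C) (g : V → C) (c : C) : Prop :=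
  (∀ w ∈ N, g w ≠ c) ∧ (c ∉ B → ∀ x ∈ B, ∃ w ∈ N, g w = x)

lemma exists_isGreedyChoice {V C : Type*} [Fintype C] {N : Finset V} {B F : Finset C}
    (hBF : Disjoint B F) (h : F.card + N.card < Fintype.card C) (g : V → C) :
    ∃ c ∉ F, IsGreedyChoice N B g c := by
  by_cases hB : ∀ x ∈ B, ∃ w ∈ N, g w = x
  · obtain ⟨c, hcF, hcN⟩ := exists_notMem_forall_ne h g
    exact ⟨c, hcF, hcN, fun _ => hB⟩
  · push Not at hB
    obtain ⟨c, hcB, hcN⟩ := hB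
    exact ⟨c, Finset.disjoint_left.1 hBF hcB, hcN, fun hc => absurd hcB hc⟩

lemma IsGreedyChoice.congr {V C : Type*} {N : Finset V} {B : Finset C} {g g' : V → C} {c : C}
    (h : IsGreedyChoice N B g c) (hg : ∀ w ∈ N, g w = g' w) : IsGreedyChoice N B g' c :=
  ⟨fun w hw => hg w hw ▸ h.1 w hw, fun hc x hx =>
    (h.2 hc x hx).imp fun w ⟨hw, e⟩ => ⟨hw, hg w hw ▸ e⟩⟩

variable {V : Type} [Fintype V] {D : V → V → Prop} {d k f M : ℕ}

/-- `b` agrees with `a` on the vertices of rank below `f`, and the remaining vertices are coloured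
greedily in order of increasing rank, each one avoiding the colours of its earlier neighbours
`o.nbrs v` and preferring the colours of `B`. -/
structure IsGreedyExtension {C : Type*} (o : MinDegenerateOrder D d) (f : ℕ) (B : Finset C)
    (a b : V → C) : Prop where
  eq_of_rank_lt : ∀ v, o.rank v < f → b v = a v
  isGreedyChoice : ∀ v, f ≤ o.rank v → IsGreedyChoice (o.nbrs v) B b (b v)

lemma exists_isGreedyExtension {C : Type*} [Fintype C] (o : MinDegenerateOrder D d) (f : ℕ)
    {B F : Finset C} (hBF : Disjoint B F) (hF : d + F.card < Fintype.card C) (a : V → C) :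
    ∃ b, IsGreedyExtension o f B a b ∧ ∀ v, f ≤ o.rank v → b v ∉ F := by
  have : Nonempty C := Fintype.card_pos_iff.1 (by omega)
  obtain ⟨b, hb⟩ := exists_fun_forall_of_rank o.rank
    (P := fun v g c => (o.rank v < f → c = a v) ∧
      (f ≤ o.rank v → c ∉ F ∧ IsGreedyChoice (o.nbrs v) B g c))
    (fun v g g' c hg hc => ⟨hc.1, fun hv => ⟨(hc.2 hv).1, (hc.2 hv).2.congr fun w hw =>
      hg w (o.rank_lt_of_mem_nbrs hw)⟩⟩)
    (fun v g => by
      rcases lt_or_ge (o.rank v) f with hv | hv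
      · exact ⟨a v, fun _ => rfl, fun hv' => absurd hv hv'.not_gt⟩
      · obtain ⟨c, hc⟩ := exists_isGreedyChoice (N := o.nbrs v) hBF
          (by have := o.card_nbrs_le v; omega) g
        exact ⟨c, fun hv' => absurd hv hv'.not_ge, fun _ => hc⟩)
  exact ⟨b, ⟨fun v => (hb v).1, fun v hv => ((hb v).2 hv).2⟩, fun v hv => ((hb v).2 hv).1⟩

namespace IsGreedyExtension

variable {o : MinDegenerateOrder D d} {B : Finset (Fin k)} {a b : V → Fin k}

lemma isDicolouring (h : IsGreedyExtension o f B a b) (ha : IsDicolouring D k a) :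
    IsDicolouring D k b := by
  rw [← isDicolouringOn_univ]
  refine IsDicolouringOn.of_forall_ne (S := {v | f ≤ o.rank v}) o.rank_injective ha.not_self
    (((isDicolouringOn_univ.2 ha).mono (Set.subset_univ _)).congr fun v hv => ?_) fun v hv => ?_
  · exact (h.eq_of_rank_lt v (by simpa using hv)).symm
  · have hfv : f ≤ o.rank v := by simpa using hv
    refine (o.covers v).imp (fun w _ hw hwS => ?_) (ha.not_self v)
    refine (h.isGreedyChoice v hfv).1 w (hw ?_)
    rcases lt_or_ge (o.rank w) f with hfw | hfw
    · exact hfw.trans_le hfv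
    · exact hwS (by simpa using hfw)

-- When `b v ∉ B`, the whole of `B` occurs on `o.nbrs v`.
lemma card_nbrs_filter_lt (h : IsGreedyExtension o f B a b) (hM : d < B.card + M) {v : V}
    (hv : f ≤ o.rank v) (hvB : b v ∉ B) : ((o.nbrs v).filter (b · ∉ B)).card < M := by
  have hB : B.card ≤ ((o.nbrs v).filter (b · ∈ B)).card := by
    refine (Finset.card_le_card fun x hx => ?_).trans
      (Finset.card_image_le (f := b))
    obtain ⟨w, hw, rfl⟩ := (h.isGreedyChoice v hv).2 hvB x hx
    exact Finset.mem_image_of_mem b (Finset.mem_filter.2 ⟨hw, hx⟩)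
  have := Finset.card_filter_add_card_filter_not (s := o.nbrs v) (b · ∈ B)
  have := o.card_nbrs_le v
  omega

lemma isDicolouring_piecewise [DecidableEq V] (h : IsGreedyExtension o f B a b)
    (ha : IsDicolouring D k a) (haB : ∀ v, f ≤ o.rank v → a v ∉ B) {Y : Finset V}
    (hY : ∀ v ∈ Y, b v ∈ B) : IsDicolouring D k (Y.piecewise b a) := by
  refine ha.of_classes (h.isDicolouring ha) fun c => ?_
  by_cases hc : c ∈ B
  · refine Or.inr fun v hv => ?_
    by_cases hvY : v ∈ Y
    · rwa [Finset.piecewise_eq_of_mem _ _ _ hvY] at hv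
    · rw [Finset.piecewise_eq_of_notMem _ _ _ hvY] at hv
      rw [h.eq_of_rank_lt v (not_le.1 fun hfv => haB v hfv (hv ▸ hc)), hv]
  · refine Or.inl fun v hv => ?_
    have hvY : v ∉ Y := fun hvY =>
      hc (by rw [← hv, Finset.piecewise_eq_of_mem _ _ _ hvY]; exact hY v hvY)
    rwa [Finset.piecewise_eq_of_notMem _ _ _ hvY] at hv

lemma edist_of_piecewise_le [DecidableEq V] (h : IsGreedyExtension o f B a b)
    (ha : IsDicolouring D k a)
    (ha' : IsDicolouring D k (Finset.piecewise {v | b v ∈ B} b a))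
    (hM : d < B.card + M) (hk : B.card + 2 * M ≤ k) :
    (dicolouringGraph D k).edist (Finset.piecewise {v | b v ∈ B} b a) b ≤
      (Fintype.card V * (M + 1) : ℕ) := by
  refine edist_le_of_forallOutOrIn (S := {v | f ≤ o.rank v ∧ b v ∉ B}) (B := B)
    (N := fun v => (o.nbrs v).filter (b · ∉ B)) o.rank_injective ha.not_self
    (fun v hv => ?_) (fun v hv => ?_) hk ha' (h.isDicolouring ha) fun v hv => ?_
  · obtain ⟨hfv, -⟩ : f ≤ o.rank v ∧ b v ∉ B := by simpa using hv
    refine (o.covers v).imp (fun w _ hw hwS => ?_) (ha.not_self v)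
    by_cases hwB : b w ∈ B
    · exact Or.inr (by simp [hwB])
    · refine Or.inl (Finset.mem_filter.2 ⟨hw ?_, hwB⟩)
      rcases lt_or_ge (o.rank w) f with hfw | hfw
      · exact hfw.trans_le hfv
      · exact hwS (by simp [hfw, hwB])
  · obtain ⟨hfv, hvB⟩ : f ≤ o.rank v ∧ b v ∉ B := by simpa using hv
    exact h.card_nbrs_filter_lt hM hfv hvB
  · by_cases hvB : b v ∈ B
    · simp [hvB]
    · have hfv : o.rank v < f := by simpa [hvB] using hv
      rw [Finset.piecewise_eq_of_notMem _ _ _ (by simpa using hvB), h.eq_of_rank_lt v hfv]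

lemma edist_le (h : IsGreedyExtension o f B a b) (ha : IsDicolouring D k a)
    (haB : ∀ v, f ≤ o.rank v → a v ∉ B) (hM : d < B.card + M) (hk : B.card + 2 * M ≤ k) :
    (dicolouringGraph D k).edist a b ≤ (Fintype.card V * (M + 2) : ℕ) := by
  classical
  have hpiecewise : IsDicolouring D k (Finset.piecewise {v | b v ∈ B} b a) :=
    h.isDicolouring_piecewise ha haB (by simp)
  have hX : (dicolouringGraph D k).edist a (Finset.piecewise {v | b v ∈ B} b a) ≤
      Fintype.card V :=
    (edist_piecewise_le_card _ fun Y hY => h.isDicolouring_piecewise ha haB fun v hv =>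
      by simpa using hY hv).trans
      (by exact_mod_cast Finset.card_le_univ _)
  refine (edist_le_add hX (h.edist_of_piecewise_le ha hpiecewise hM hk)).trans_eq ?_
  congr 1
  ring

end IsGreedyExtension

end Greedy

section Diameter

variable {V : Type} [Fintype V] {D : V → V → Prop} {d k s M : ℕ}

lemma exists_card_eq_disjoint {C : Type*} [Fintype C] {s : ℕ} (A : Finset C)
    (h : s + A.card ≤ Fintype.card C) : ∃ B : Finset C, B.card = s ∧ Disjoint B A := by
  classical
  obtain ⟨B, hBA, hB⟩ := Finset.exists_subset_card_eq (s := Aᶜ) (n := s)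
    (by rw [Finset.card_compl]; omega)
  exact ⟨B, hB, Finset.subset_compl_iff_disjoint_right.1 hBA⟩

lemma exists_edist_le_avoid_disjoint (o : MinDegenerateOrder D d) {f : ℕ} {B F : Finset (Fin k)}
    (hBF : Disjoint B F) (hF : d + F.card < k) (hM : d < B.card + M) (hk : B.card + 2 * M ≤ k)
    {a : V → Fin k} (ha : IsDicolouring D k a) (haB : ∀ v, f ≤ o.rank v → a v ∉ B) :
    ∃ b, IsDicolouring D k b ∧
      (dicolouringGraph D k).edist a b ≤ (Fintype.card V * (M + 2) : ℕ) ∧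
      (∀ v, o.rank v < f → b v = a v) ∧ ∀ v, f ≤ o.rank v → b v ∉ F := by
  obtain ⟨b, hb, hbF⟩ := exists_isGreedyExtension o f hBF (by simpa using hF) a
  exact ⟨b, hb.isDicolouring ha, hb.edist_le ha haB hM hk, hb.eq_of_rank_lt, hbF⟩

lemma card_image_rank_block_le (o : MinDegenerateOrder D d) {C : Type*}
    [DecidableEq C] (a : V → C) {f f' : ℕ} (hf : f ≤ f' + M) :
    (Finset.image a {v | f' ≤ o.rank v ∧ o.rank v < f}).card ≤ M :=
  calc _ ≤ (Finset.Ico f' f).card := Finset.card_image_le.trans <|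
        Finset.card_le_card_of_injOn o.rank (fun v hv => by simpa using hv)
          o.rank_injective.injOn
    _ ≤ M := by rw [Nat.card_Ico]; omega

-- At most `M` colours occur on the block `f' ≤ rank < f`, so some set of `s` colours avoids them as
-- well as `B`.
lemma exists_edist_le_avoid_block (o : MinDegenerateOrder D d) (hM : d < s + M)
    (hk : 2 * s + M ≤ k) (hk' : s + 2 * M ≤ k) {f f' : ℕ} (hff' : f ≤ f' + M)
    {a : V → Fin k} {B : Finset (Fin k)} (hB : B.card = s) (ha : IsDicolouring D k a)
    (haB : ∀ v, f ≤ o.rank v → a v ∉ B) :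
    ∃ (b : V → Fin k) (B' : Finset (Fin k)), B'.card = s ∧ IsDicolouring D k b ∧
      (dicolouringGraph D k).edist a b ≤ (Fintype.card V * (M + 2) : ℕ) ∧
      ∀ v, f' ≤ o.rank v → b v ∉ B' := by
  classical
  set blockColours : Finset (Fin k) := Finset.image a {v | f' ≤ o.rank v ∧ o.rank v < f}
  have hblock : blockColours.card ≤ M := card_image_rank_block_le o a hff'
  obtain ⟨B', hB', hdisj⟩ := exists_card_eq_disjoint (s := s) (B ∪ blockColours)
    (by have := Finset.card_union_le B blockColours; rw [Fintype.card_fin]; omega)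
  rw [Finset.disjoint_union_right] at hdisj
  obtain ⟨b, hb, hab, hbot, htop⟩ := exists_edist_le_avoid_disjoint (M := M) o hdisj.1.symm
    (by omega) (by omega) (by omega) ha haB
  refine ⟨b, B', hB', hb, hab, fun v hv => ?_⟩
  rcases lt_or_ge (o.rank v) f with hvf | hvf
  · rw [hbot v hvf]
    exact Finset.disjoint_right.1 hdisj.2 (Finset.mem_image_of_mem a (by simpa using ⟨hv, hvf⟩))
  · exact htop v hvf

lemma exists_edist_le_avoid_top (o : MinDegenerateOrder D d) (hM : d < s + M) (hk : 2 * s + M ≤ k)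
    (hk' : s + 2 * M ≤ k) {a : V → Fin k} (ha : IsDicolouring D k a) (t : ℕ) :
    ∃ (b : V → Fin k) (B : Finset (Fin k)), B.card = s ∧ IsDicolouring D k b ∧
      (dicolouringGraph D k).edist a b ≤ (t * (Fintype.card V * (M + 2)) : ℕ) ∧
      ∀ v, Fintype.card V - t * M ≤ o.rank v → b v ∉ B := by
  induction t with
  | zero =>
    obtain ⟨B, hB, -⟩ := exists_card_eq_disjoint (s := s) (∅ : Finset (Fin k)) (by simp; omega)
    exact ⟨a, B, hB, ha, by simp, fun v hv => absurd (o.rank_lt_card v) (by simpa using hv)⟩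
  | succ t ih =>
    obtain ⟨b, B, hB, hb, hab, htop⟩ := ih
    obtain ⟨b', B', hB', hb', hbb', htop'⟩ := exists_edist_le_avoid_block
      (f' := Fintype.card V - (t + 1) * M) o hM hk hk' (by rw [add_mul]; omega) hB hb htop
    refine ⟨b', B', hB', hb', ?_, htop'⟩
    rw [add_one_mul]
    exact edist_le_add hab hbb'

lemma exists_edist_le_avoid (o : MinDegenerateOrder D d) (hM₀ : 0 < M) (hM : d < s + M)
    (hk : 2 * s + M ≤ k) (hk' : s + 2 * M ≤ k) {a : V → Fin k} (ha : IsDicolouring D k a) :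
    ∃ (b : V → Fin k) (B : Finset (Fin k)), B.card = s ∧ IsDicolouring D k b ∧
      (dicolouringGraph D k).edist a b ≤
        ((Fintype.card V / M + 1) * (Fintype.card V * (M + 2)) : ℕ) ∧ ∀ v, b v ∉ B := by
  obtain ⟨b, B, hB, hb, hab, htop⟩ :=
    exists_edist_le_avoid_top o hM hk hk' ha (Fintype.card V / M + 1)
  refine ⟨b, B, hB, hb, hab, fun v => htop v ?_⟩
  rw [Nat.sub_eq_zero_of_le (Nat.lt_div_mul_add hM₀ |>.le.trans_eq (by ring))]
  exact Nat.zero_le _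

lemma edist_le_of_minDegenerateOrder (o : MinDegenerateOrder D d) (hM₀ : 0 < M) (hM : d < s + M)
    (hk : 2 * s + M ≤ k) (hk' : s + 2 * M ≤ k) (hs : 3 * s ≤ k) {α β : V → Fin k}
    (hα : IsDicolouring D k α) (hβ : IsDicolouring D k β) :
    (dicolouringGraph D k).edist α β ≤
      (2 * ((Fintype.card V / M + 3) * (Fintype.card V * (M + 2))) : ℕ) := by
  classical
  obtain ⟨a, A, hA, ha, hαa, haA⟩ := exists_edist_le_avoid o hM₀ hM hk hk' hα
  obtain ⟨b, B, hB, hb, hβb, hbB⟩ := exists_edist_le_avoid o hM₀ hM hk hk' hβ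
  obtain ⟨F, hF, hdisj⟩ := exists_card_eq_disjoint (s := s) (A ∪ B)
    (by have := Finset.card_union_le A B; rw [Fintype.card_fin]; omega)
  rw [Finset.disjoint_union_right] at hdisj
  obtain ⟨c, hc, -⟩ := exists_isGreedyExtension o 0 (Finset.disjoint_empty_right F)
    (by simp; omega) α
  have edist_to_c : ∀ {γ g : V → Fin k} {G : Finset (Fin k)}, G.card = s → IsDicolouring D k g →
      (dicolouringGraph D k).edist γ g ≤
        ((Fintype.card V / M + 1) * (Fintype.card V * (M + 2)) : ℕ) →
      (∀ v, g v ∉ G) → Disjoint F G → (dicolouringGraph D k).edist γ c ≤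
        ((Fintype.card V / M + 3) * (Fintype.card V * (M + 2)) : ℕ) := by
    intro γ g G hG hg hγg hgG hFG
    obtain ⟨g', hg', hgg', -, hgF⟩ := exists_edist_le_avoid_disjoint (M := M) (f := 0) o hFG.symm
      (by omega) (by omega) (by omega) hg fun v _ => hgG v
    have hgc : IsGreedyExtension o 0 F g' c := ⟨fun v hv => absurd hv (by simp), hc.isGreedyChoice⟩
    refine (edist_le_add (edist_le_add hγg hgg')
      (hgc.edist_le (M := M) hg' hgF (by omega) (by omega))).trans_eq ?_
    congr 1
    ring
  rw [two_mul]
  refine edist_le_add (edist_to_c hA ha hαa haA hdisj.1) ?_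
  rw [SimpleGraph.edist_comm]
  exact edist_to_c hB hb hβb hbB hdisj.2

theorem quadratic_diameter_general
    (hdeg : ∀ S : Set V, S.Nonempty → ∃ v ∈ S, min (outDegOn D S v) (inDegOn D S v) ≤ d)
    (hk : 3 * (d + 1) ≤ 2 * k) {α β : V → Fin k} (hα : IsDicolouring D k α)
    (hβ : IsDicolouring D k β) :
    (dicolouringGraph D k).edist α β ≤ (24 * Fintype.card V ^ 2 : ℕ) := by
  obtain ⟨o⟩ := nonempty_minDegenerateOrder hdeg
  set n := Fintype.card V with hn
  obtain ⟨s, M, _, _, _⟩ : ∃ s M, s + M = min d (n - 1) + 1 ∧ s ≤ M ∧ M ≤ s + 1 :=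
    ⟨(min d (n - 1) + 1) / 2, (min d (n - 1) + 2) / 2, by omega, by omega, by omega⟩
  refine (edist_le_of_minDegenerateOrder (s := s) (M := M) o (by omega) (by omega) (by omega)
    (by omega) (by omega) hα hβ).trans ?_
  rw [← hn]
  have hnM : n * M ≤ n * n := by
    rcases Nat.eq_zero_or_pos n with h0 | hpos
    · simp [h0]
    · exact Nat.mul_le_mul_left n (by omega)
  have hdiv : n / M * M ≤ n := Nat.div_mul_le_self n M
  have hM₀ : 1 ≤ M := by omega
  norm_cast
  calc 2 * ((n / M + 3) * (n * (M + 2))) ≤ 2 * ((n / M + 3) * (n * (3 * M))) := by gcongr; omega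
    _ = 6 * (n * (n / M * M)) + 18 * (n * M) := by ring
    _ ≤ 6 * (n * n) + 18 * (n * n) := by gcongr
    _ = 24 * n ^ 2 := by ring

end Diameter

/-- There is a universal constant `C` such that for every digraph `D` on `n`
vertices and every `k ≥ (3/2)(δ*_min(D) + 1)`, the `k`-dicolouring graph of `D`
has diameter at most `C n²`. -/
theorem quadratic_diameter :
    ∃ C : ℕ, ∀ (n : ℕ) (D : Fin n → Fin n → Prop), Irreflexive D →
      ∀ d k : ℕ,
        (∀ S : Set (Fin n), S.Nonempty →
          ∃ v ∈ S, min (outDegOn D S v) (inDegOn D S v) ≤ d) →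
        3 * (d + 1) ≤ 2 * k →
        ∀ α β : Fin n → Fin k, IsDicolouring D k α → IsDicolouring D k β →
          ∃ (m : ℕ) (γ : ℕ → Fin n → Fin k),
            γ 0 = α ∧ γ m = β ∧ RecolWalk D k m γ ∧ m ≤ C * n ^ 2 :=
  ⟨24, fun n D _ d k hdeg hk α β hα hβ => exists_recolWalk_of_edist_le hα <| by
    simpa using quadratic_diameter_general hdeg hk hα hβ⟩
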